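/- arXiv:2604.18571 — 2 statements merged into one kernel-verified Lean document; each statement's English description precedes it below -/
import Mathlib

section
/- Let d ≥ 1, s ∈ (0,1), p ∈ (1,2], R₀ ∈ (0,1), k ∈ ℕ, and let u : ℝ^d → ℝ be of class C^{1,α} on the ball B_{R₀}(0) for some α ∈ (0,1] with 1 + α > sp/(p−1), with u vanishing to infinite order at 0 (for every n ∈ ℕ, u(x) = O(|x|^n) as |x| → 0). For ε > 0 and x ∈ ℝ^d define W₁(x,ε) := (1/2) ∫_{B_{(k+1)ε}(0)} [J_p(u(x)−u(x+h)) + J_p(u(x)−u(x−h))] |h|^{−d−sp} dh. Then for every n ∈ ℕ there exist C > 0 and ε₁ > 0 such that sup_{x ∈ B_{kε}(0)} |W₁(x,ε)| ≤ C ε^n for all ε ∈ (0,ε₁). -/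
open MeasureTheory Filter Asymptotics Metric Set NNReal ENNReal

noncomputable section

/-- Euclidean space `ℝ^d`. -/
abbrev Ed (d : ℕ) := EuclideanSpace ℝ (Fin d)

/-- `J_p(t) = |t|^{p-2} t`. -/
def Jp (p t : ℝ) : ℝ := |t| ^ (p - 2) * t

/-- The principal value defining the fractional `p`-Laplacian of `u` at `x` exists and
equals `L`. -/
def fracPLapAt (d : ℕ) (s p : ℝ) (u : Ed d → ℝ) (x : Ed d) (L : ℝ) : Prop :=
  Tendsto (fun δ : ℝ =>
      ∫ y in {y : Ed d | δ < ‖x - y‖}, Jp p (u x - u y) / ‖x - y‖ ^ ((d : ℝ) + s * p))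
    (nhdsWithin 0 (Ioi 0)) (nhds L)

/-- Membership in the tail space `L^{p-1}_{sp}(ℝ^d)`. -/
def memTail (d : ℕ) (s p : ℝ) (u : Ed d → ℝ) : Prop :=
  Measurable u ∧
    Integrable (fun x : Ed d => |u x| ^ (p - 1) / (1 + ‖x‖) ^ ((d : ℝ) + s * p))

/-- The moments `m_{i,k} = ∫ x_i^{2k} |x|^{-4k} |u(x)|^{p-1} |x|^{-d-sp} dx ∈ [0,∞]`. -/
def mik (d : ℕ) (s p : ℝ) (u : Ed d → ℝ) (i : Fin d) (k : ℕ) : ℝ≥0∞ :=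
  ∫⁻ x : Ed d, ENNReal.ofReal
    ((x i ^ (2 * k) / ‖x‖ ^ (4 * k)) * (|u x| ^ (p - 1) / ‖x‖ ^ ((d : ℝ) + s * p)))

/-- The Carleman-type condition: for every `i` the series `∑_{k≥1} m_{i,k}^{-1/(2k)}`
diverges to `+∞` (with conventions `1/0 = ∞`, `1/∞ = 0`). -/
def carleman (d : ℕ) (s p : ℝ) (u : Ed d → ℝ) : Prop :=
  ∀ i : Fin d, ∑' k : ℕ, (mik d s p u i (k + 1) ^ ((1 : ℝ) / (2 * ((k : ℝ) + 1))))⁻¹ = ⊤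

lemma aux_rpow {q a b : ℝ} (hq : 0 < q) (hq1 : q ≤ 1) (hb : 0 ≤ b) (hab : b ≤ a) :
    a ^ q - b ^ q ≤ (a - b) ^ q := by
  have := Real.rpow_add_le_add_rpow (sub_nonneg.2 hab) hb hq.le hq1
  simp only [sub_add_cancel] at this
  linarith

lemma Jp_of_nonneg {p t : ℝ} (hp : 1 < p) (ht : 0 ≤ t) : Jp p t = t ^ (p - 1) := by
  unfold Jp
  rcases ht.eq_or_lt with rfl | h
  · rw [Real.zero_rpow (by linarith)]; simp
  · rw [abs_of_pos h, show p - 1 = (p - 2) + 1 by ring, Real.rpow_add_one h.ne']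

lemma Jp_neg (p t : ℝ) : Jp p (-t) = - Jp p t := by
  simp [Jp]

lemma Jp_holder_le {p a b : ℝ} (hp : 1 < p) (hp2 : p ≤ 2) (hab : b ≤ a) :
    |Jp p a - Jp p b| ≤ 2 * (a - b) ^ (p - 1) := by
  have hq : 0 < p - 1 := by linarith
  have hq1 : p - 1 ≤ 1 := by linarith
  have h0 : 0 ≤ (a - b) ^ (p - 1) := Real.rpow_nonneg (by linarith) _
  rcases le_total 0 b with hb | hb
  · rw [Jp_of_nonneg hp hb, Jp_of_nonneg hp (hb.trans hab), abs_of_nonneg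
      (sub_nonneg.2 (Real.rpow_le_rpow hb hab hq.le))]
    linarith [aux_rpow hq hq1 hb hab]
  · have eb : Jp p b = - (-b) ^ (p - 1) := by
      rw [← Jp_of_nonneg hp (by linarith), Jp_neg]; ring
    rcases le_total 0 a with ha | ha
    · rw [eb, Jp_of_nonneg hp ha, sub_neg_eq_add, abs_of_nonneg
        (add_nonneg (Real.rpow_nonneg ha _) (Real.rpow_nonneg (by linarith) _))]
      have h1 : a ^ (p - 1) ≤ (a - b) ^ (p - 1) := Real.rpow_le_rpow ha (by linarith) hq.le
      have h2 : (-b) ^ (p - 1) ≤ (a - b) ^ (p - 1) :=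
        Real.rpow_le_rpow (by linarith) (by linarith) hq.le
      linarith
    · have ea : Jp p a = - (-a) ^ (p - 1) := by
        rw [← Jp_of_nonneg hp (by linarith), Jp_neg]; ring
      have h1 := aux_rpow hq hq1 (b := -a) (a := -b) (by linarith) (by linarith)
      have h2 : (-a) ^ (p - 1) ≤ (-b) ^ (p - 1) :=
        Real.rpow_le_rpow (by linarith) (by linarith) hq.le
      rw [ea, eb, abs_of_nonneg (by linarith)]
      rw [show -b - -a = a - b by ring] at h1
      linarith

lemma Jp_holder {p a b : ℝ} (hp : 1 < p) (hp2 : p ≤ 2) :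
    |Jp p a - Jp p b| ≤ 2 * |a - b| ^ (p - 1) := by
  rcases le_total b a with h | h
  · rw [abs_of_nonneg (sub_nonneg.2 h)]; exact Jp_holder_le hp hp2 h
  · rw [abs_sub_comm, abs_sub_comm a b, abs_of_nonneg (sub_nonneg.2 h)]
    exact Jp_holder_le hp hp2 h

lemma second_diff {d : ℕ} {R₀ : ℝ} {u : Ed d → ℝ} {α C : ℝ≥0}
    (hdiff : DifferentiableOn ℝ u (ball (0 : Ed d) R₀))
    (hHol : HolderOnWith C α (fderiv ℝ u) (ball (0 : Ed d) R₀))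
    {x h : Ed d} (hxh : ‖x‖ + ‖h‖ < R₀) :
    |u (x + h) + u (x - h) - 2 * u x| ≤ C * (2 * ‖h‖) ^ (α : ℝ) * ‖h‖ := by
  have hp : ∀ v ∈ closedBall (0 : Ed d) ‖h‖, x + v ∈ ball (0 : Ed d) R₀ := by
    intro v hv
    rw [mem_closedBall_zero_iff] at hv
    rw [mem_ball_zero_iff]
    linarith [norm_add_le x v]
  have hm : ∀ v ∈ closedBall (0 : Ed d) ‖h‖, x - v ∈ ball (0 : Ed d) R₀ := by
    intro v hv
    rw [mem_closedBall_zero_iff] at hv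
    rw [mem_ball_zero_iff]
    linarith [norm_sub_le x v]
  have key := Convex.norm_image_sub_le_of_norm_hasFDerivWithin_le
    (f := fun v => u (x + v) + u (x - v))
    (f' := fun v => fderiv ℝ u (x + v) - fderiv ℝ u (x - v))
    (s := closedBall (0 : Ed d) ‖h‖) (C := C * (2 * ‖h‖) ^ (α : ℝ)) (x := 0) (y := h)
    ?_ ?_ (convex_closedBall _ _) (by simp) (by simp)
  · simp only [add_zero, sub_zero, Real.norm_eq_abs] at key
    rwa [← two_mul] at key
  · intro v hv
    have h1 := (hdiff.differentiableAt (isOpen_ball.mem_nhds (hp v hv))).hasFDerivAt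
    have h2 := (hdiff.differentiableAt (isOpen_ball.mem_nhds (hm v hv))).hasFDerivAt
    have h3 := h1.comp v ((hasFDerivAt_id v).const_add x)
    have h4 := h2.comp v ((hasFDerivAt_id v).const_sub x)
    have h5 := (h3.add h4).hasFDerivWithinAt (s := closedBall (0 : Ed d) ‖h‖)
    convert h5 using 1
    · rfl
    rw [ContinuousLinearMap.comp_neg, ContinuousLinearMap.comp_id,
      ContinuousLinearMap.comp_id, sub_eq_add_neg]
  · intro v hv
    have := hHol.dist_le (hp v hv) (hm v hv)
    rw [dist_eq_norm] at this
    refine this.trans ?_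
    gcongr
    rw [mem_closedBall_zero_iff] at hv
    rw [dist_eq_norm, show x + v - (x - v) = (2 : ℝ) • v by module, norm_smul]
    simpa using hv

lemma integ {d : ℕ} (hd : 1 ≤ d) {γ e : ℝ} (he : e - d < γ) :
    IntegrableOn (fun h : Ed d => ‖h‖ ^ γ / ‖h‖ ^ e) (ball (0 : Ed d) 1) := by
  have : Nontrivial (Ed d) := by
    have : Nonempty (Fin d) := ⟨⟨0, hd⟩⟩
    infer_instance
  rw [← integrable_indicator_iff measurableSet_ball]
  have : (ball (0 : Ed d) 1).indicator (fun h : Ed d => ‖h‖ ^ γ / ‖h‖ ^ e)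
      = fun h => (Iio (1:ℝ)).indicator (fun r : ℝ => r ^ γ / r ^ e) ‖h‖ := by
    ext h
    simp [indicator]
  rw [this, integrable_fun_norm_addHaar (volume : Measure (Ed d))]
  have h1 : IntegrableOn (fun r : ℝ => r ^ ((d : ℝ) - 1 + γ - e)) (Ioo 0 1) := by
    rw [intervalIntegral.integrableOn_Ioo_rpow_iff one_pos]; linarith
  rw [← integrable_indicator_iff measurableSet_Ioo] at h1
  refine h1.integrableOn.congr_fun ?_ measurableSet_Ioi
  intro r hr
  have hr : 0 < r := hr
  simp only [indicator, mem_Ioo, hr, true_and, mem_Iio, finrank_euclideanSpace, Fintype.card_fin, smul_eq_mul]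
  split_ifs
  · rw [Real.rpow_sub hr, Real.rpow_add hr, ← Nat.cast_one, ← Nat.cast_sub hd, Real.rpow_natCast]
    ring
  · simp

set_option maxHeartbeats 1000000 in
/-- Claim A, case `1 < p ≤ 2`, `u ∈ C^{1,α}` with `1 + α > sp/(p-1)`.
If `u` is `C^{1,α}` on `B_{R₀}(0)` and vanishes to infinite order at `0`, then
`W₁(x,ε) = (1/2)∫_{B_{(k+1)ε}(0)} [J_p(u(x)-u(x+h)) + J_p(u(x)-u(x-h))] |h|^{-d-sp} dh`
converges to zero of arbitrary order, uniformly for `x ∈ B_{kε}(0)`. -/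
theorem claimA_C1alpha_p_le_two
    (d : ℕ) (hd : 1 ≤ d) (s p : ℝ) (hs : s ∈ Ioo (0 : ℝ) 1) (hp : 1 < p) (hp2 : p ≤ 2)
    (R₀ : ℝ) (hR₀ : R₀ ∈ Ioo (0 : ℝ) 1) (k : ℕ)
    (u : Ed d → ℝ)
    (α : ℝ≥0) (hα_pos : 0 < α) (hα_le : (α : ℝ) ≤ 1) (hα : s * p / (p - 1) < 1 + (α : ℝ))
    (hdiff : DifferentiableOn ℝ u (ball (0 : Ed d) R₀))
    (hHol : ∃ C : ℝ≥0, HolderOnWith C α (fderiv ℝ u) (ball (0 : Ed d) R₀))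
    (hvan : ∀ n : ℕ, u =O[nhds (0 : Ed d)] fun x => ‖x‖ ^ n) :
    ∀ n : ℕ, ∃ C > (0 : ℝ), ∃ ε₁ > (0 : ℝ), ∀ ε ∈ Ioo (0 : ℝ) ε₁,
      ∀ x ∈ ball (0 : Ed d) (k * ε),
        |(1 / 2) * ∫ h in ball (0 : Ed d) ((k + 1) * ε),
            (Jp p (u x - u (x + h)) + Jp p (u x - u (x - h))) / ‖h‖ ^ ((d : ℝ) + s * p)|
          ≤ C * ε ^ n := by
  intro n
  obtain ⟨A₀, hA₀⟩ := hHol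
  have hq : 0 < p - 1 := by linarith
  have hα1 : (0 : ℝ) < 1 + α := by positivity
  have hsp : 0 < s * p := mul_pos hs.1 (by linarith)
  set q := p - 1 with hqdef
  rw [div_lt_iff₀ hq] at hα
  -- choice of the interpolation parameter
  obtain ⟨θ, hθ0, hθ1, hθ⟩ : ∃ θ : ℝ, 0 < θ ∧ θ < 1 ∧ s * p < (1 + α) * (q * (1 - θ)) := by
    have hm : 0 < (1 + (α : ℝ)) * q := by positivity
    refine ⟨((1 + α) * q - s * p) / (2 * ((1 + α) * q)), by
      apply div_pos <;> linarith, by rw [div_lt_one] <;> linarith, ?_⟩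
    have : (1 + (α : ℝ)) * (q * (1 - ((1 + α) * q - s * p) / (2 * ((1 + α) * q))))
        = (1 + α) * q - ((1 + α) * q - s * p) / 2 := by
      field_simp
    rw [this]; linarith
  obtain ⟨N, hN⟩ := exists_nat_ge ((n : ℝ) / (q * θ))
  rw [div_le_iff₀ (by positivity)] at hN
  obtain ⟨c, hc, hcO⟩ := (hvan N).exists_pos
  obtain ⟨r, hr, hrb⟩ := Metric.eventually_nhds_iff.1 hcO.bound
  set A : ℝ := A₀ * 2 ^ (α : ℝ) with hA
  have hA0 : 0 ≤ A := by positivity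
  set B : ℝ := 4 * (c * (2 * k + 1) ^ N) with hB
  have hB0 : 0 < B := by positivity
  set γ := (1 + (α : ℝ)) * (q * (1 - θ)) with hγ
  set I : ℝ := ∫ h in ball (0 : Ed d) 1, ‖h‖ ^ γ / ‖h‖ ^ ((d : ℝ) + s * p) with hI
  have hint : IntegrableOn (fun h : Ed d => ‖h‖ ^ γ / ‖h‖ ^ ((d : ℝ) + s * p))
      (ball (0 : Ed d) 1) := integ hd (by linarith)
  have hI0 : 0 ≤ I := integral_nonneg fun h => by positivity
  set M : ℝ := 2 * (A ^ (q * (1 - θ)) * B ^ (q * θ)) with hM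
  have hM0 : 0 ≤ M := by positivity
  have hk : (0 : ℝ) < 2 * k + 1 := by positivity
  refine ⟨M * I + 1, by positivity, min r R₀ / (2 * k + 1), div_pos (lt_min hr hR₀.1) hk, ?_⟩
  rintro ε ⟨hε, hε1⟩ x hx
  rw [lt_div_iff₀ hk, lt_min_iff] at hε1
  obtain ⟨hεr, hεR⟩ := hε1
  rw [mem_ball_zero_iff] at hx
  have hk0 : (0 : ℝ) ≤ k := by positivity
  have hεlt : ε < 1 := by nlinarith [hR₀.2]
  have hk1 : ((k : ℝ) + 1) * ε ≤ 1 := by nlinarith [hR₀.2]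
  have hub : ∀ y : Ed d, ‖y‖ ≤ (2 * k + 1) * ε → |u y| ≤ c * ((2 * k + 1) ^ N * ε ^ N) := by
    intro y hy
    have h1 := hrb (y := y) (by rw [dist_zero_right]; linarith)
    rw [norm_pow, norm_norm, Real.norm_eq_abs] at h1
    refine h1.trans ?_
    rw [← mul_pow]
    gcongr
  have hpt : ∀ h ∈ ball (0 : Ed d) ((k + 1) * ε),
      ‖(Jp p (u x - u (x + h)) + Jp p (u x - u (x - h))) / ‖h‖ ^ ((d : ℝ) + s * p)‖
        ≤ (M * ε ^ n) * (‖h‖ ^ γ / ‖h‖ ^ ((d : ℝ) + s * p)) := by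
    intro h hh
    rw [mem_ball_zero_iff] at hh
    have hs1 : ‖x‖ + ‖h‖ < (2 * k + 1) * ε := by linarith
    have hJ := Jp_holder (a := u x - u (x + h)) (b := u (x - h) - u x) hp hp2
    rw [show u (x - h) - u x = -(u x - u (x - h)) by ring, Jp_neg, sub_neg_eq_add,
      show u x - u (x + h) - -(u x - u (x - h)) = -(u (x + h) + u (x - h) - 2 * u x) by ring,
      abs_neg] at hJ
    set D := |u (x + h) + u (x - h) - 2 * u x| with hD
    have hD0 : 0 ≤ D := abs_nonneg _
    have hD1 : D ≤ A * ‖h‖ ^ (1 + (α : ℝ)) := by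
      refine (second_diff hdiff hA₀ (by linarith)).trans (le_of_eq ?_)
      rw [Real.mul_rpow (by norm_num) (norm_nonneg _),
        Real.rpow_add_of_nonneg (norm_nonneg _) zero_le_one α.coe_nonneg, Real.rpow_one]
      ring
    have hD2 : D ≤ B * ε ^ N := by
      have h1 := abs_le.1 (hub x (by linarith [norm_nonneg h]))
      have h2 := abs_le.1 (hub (x + h) (by linarith [norm_add_le x h]))
      have h3 := abs_le.1 (hub (x - h) (by linarith [norm_sub_le x h]))
      rw [hD, hB, abs_le]
      constructor <;> linarith
    have e1 : D ^ q = D ^ (q * (1 - θ)) * D ^ (q * θ) := by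
      rw [← Real.rpow_add_of_nonneg hD0 (mul_nonneg hq.le (by linarith)) (by positivity)]
      congr 1; ring
    have hD1' : D ^ (q * (1 - θ)) ≤ A ^ (q * (1 - θ)) * ‖h‖ ^ γ := by
      refine (Real.rpow_le_rpow hD0 hD1 (mul_nonneg hq.le (by linarith))).trans (le_of_eq ?_)
      rw [Real.mul_rpow hA0 (by positivity), ← Real.rpow_mul (norm_nonneg _)]
    have hD2' : D ^ (q * θ) ≤ B ^ (q * θ) * ε ^ n := by
      refine (Real.rpow_le_rpow hD0 hD2 (by positivity)).trans ?_
      rw [Real.mul_rpow hB0.le (by positivity), ← Real.rpow_natCast ε N,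
        ← Real.rpow_mul hε.le, ← Real.rpow_natCast ε n]
      exact mul_le_mul_of_nonneg_left
        (Real.rpow_le_rpow_of_exponent_ge hε hεlt.le hN) (by positivity)
    have hfin : |Jp p (u x - u (x + h)) + Jp p (u x - u (x - h))| ≤ (M * ε ^ n) * ‖h‖ ^ γ := by
      refine hJ.trans ?_
      rw [e1]
      calc 2 * (D ^ (q * (1 - θ)) * D ^ (q * θ))
          ≤ 2 * ((A ^ (q * (1 - θ)) * ‖h‖ ^ γ) * (B ^ (q * θ) * ε ^ n)) := by gcongr
        _ = (M * ε ^ n) * ‖h‖ ^ γ := by rw [hM]; ring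
    rw [norm_div, Real.norm_eq_abs, Real.norm_of_nonneg (by positivity), ← mul_div_assoc]
    gcongr
  have hsub : ball (0 : Ed d) ((k + 1) * ε) ⊆ ball (0 : Ed d) 1 := ball_subset_ball hk1
  have hle := norm_integral_le_of_norm_le
    (μ := volume.restrict (ball (0 : Ed d) ((k + 1) * ε)))
    ((hint.mono_set hsub).const_mul (M * ε ^ n))
    (ae_restrict_of_forall_mem measurableSet_ball hpt)
  rw [integral_const_mul, Real.norm_eq_abs] at hle
  have hmono : ∫ h in ball (0 : Ed d) ((k + 1) * ε), ‖h‖ ^ γ / ‖h‖ ^ ((d : ℝ) + s * p) ≤ I :=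
    setIntegral_mono_set hint (ae_of_all _ fun h => by simp only [Pi.zero_apply]; positivity)
      hsub.eventuallyLE
  rw [abs_mul, abs_of_nonneg (by norm_num : (0 : ℝ) ≤ 1 / 2)]
  have hεn : 0 < ε ^ n := by positivity
  have h1 := hle.trans (mul_le_mul_of_nonneg_left hmono (by positivity))
  have h2 : 0 ≤ M * ε ^ n * I := by positivity
  nlinarith
end
end

section
/- Let d ≥ 1, s ∈ (0,1), p ∈ (1,∞), and let Ω ⊂ ℝ^d be an open set with 0 ∈ Ω. Assume u ∈ L^{p−1}_{sp}(ℝ^d) is locally β-Hölder continuous in Ω for some β with sp/(p−1) < β ≤ 1, u vanishes to infinite order at 0 (for every n ∈ ℕ, u(x) = O(|x|^n) as |x| → 0), and the principal value U(x) := (−Δ_p)^s u(x) exists for every x ∈ Ω. Then for every multiindex α ∈ ℕ^d the function y ↦ J_p(u(y)) ∂_y^α |y|^{−d−sp} is absolutely integrable on ℝ^d and the finite difference quotients of U at the origin converge: D_ε^α U(0) → −∫_{ℝ^d} J_p(u(y)) (−1)^{|α|} ∂_y^α |y|^{−d−sp} dy as ε → 0⁺. -/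
open MeasureTheory Filter Asymptotics Metric Set NNReal ENNReal

noncomputable section

/-- One-step forward difference quotient in direction `e_i` with step `ε`. -/
def fdiff1 (d : ℕ) (ε : ℝ) (i : Fin d) (g : Ed d → ℝ) : Ed d → ℝ :=
  fun x => (g (x + ε • EuclideanSpace.single i 1) - g x) / ε

/-- Finite difference quotient `D_ε^α` for a multiindex `α ∈ ℕ^d`. -/
def fdiffMulti (d : ℕ) (ε : ℝ) (α : Fin d → ℕ) (g : Ed d → ℝ) : Ed d → ℝ :=
  (List.finRange d).foldr (fun i acc => (fdiff1 d ε i)^[α i] acc) g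

/-- Partial derivative in direction `e_i`. -/
def pderiv1 (d : ℕ) (i : Fin d) (g : Ed d → ℝ) : Ed d → ℝ :=
  fun x => fderiv ℝ g x (EuclideanSpace.single i 1)

/-- Iterated partial derivative `∂^α` for a multiindex `α ∈ ℕ^d`. -/
def pderivMulti (d : ℕ) (α : Fin d → ℕ) (g : Ed d → ℝ) : Ed d → ℝ :=
  (List.finRange d).foldr (fun i acc => (pderiv1 d i)^[α i] acc) g


/-! ### Lists of directions -/
open scoped ContDiff
namespace FDQ

def Dl (d : ℕ) (ε : ℝ) (l : List (Fin d)) (g : Ed d → ℝ) : Ed d → ℝ := l.foldr (fdiff1 d ε) g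
def Pl (d : ℕ) (l : List (Fin d)) (g : Ed d → ℝ) : Ed d → ℝ := l.foldr (pderiv1 d) g
def lst (d : ℕ) (α : Fin d → ℕ) : List (Fin d) :=
  (List.finRange d).flatMap (fun i => List.replicate (α i) i)

lemma foldr_replicate_aux {d : ℕ} {X : Type*} (f : Fin d → X → X) (i : Fin d) (n : ℕ) (g : X) :
    (List.replicate n i).foldr f g = (f i)^[n] g := by
  induction n with
  | zero => rfl
  | succ n ih => rw [List.replicate_succ, List.foldr_cons, ih, Function.iterate_succ_apply']

lemma foldr_aux {d : ℕ} {X : Type*} (f : Fin d → X → X) (α : Fin d → ℕ) (L : List (Fin d)) (g : X) :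
    L.foldr (fun i acc => (f i)^[α i] acc) g =
      (L.flatMap (fun i => List.replicate (α i) i)).foldr f g := by
  induction L with
  | nil => rfl
  | cons a L ih =>
    rw [List.foldr_cons, ih, List.flatMap_cons, List.foldr_append, foldr_replicate_aux]

lemma fdiffMulti_eq (d : ℕ) (ε : ℝ) (α : Fin d → ℕ) (g : Ed d → ℝ) :
    fdiffMulti d ε α g = Dl d ε (lst d α) g := foldr_aux _ _ _ _
lemma pderivMulti_eq (d : ℕ) (α : Fin d → ℕ) (g : Ed d → ℝ) :
    pderivMulti d α g = Pl d (lst d α) g := foldr_aux _ _ _ _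
lemma length_lst (d : ℕ) (α : Fin d → ℕ) : (lst d α).length = ∑ i, α i := by
  rw [lst, List.length_flatMap]
  simp [Fin.sum_univ_def]

variable {d : ℕ}

lemma Dl_cons (ε : ℝ) (i : Fin d) (l : List (Fin d)) (g : Ed d → ℝ) (x : Ed d) :
    Dl d ε (i :: l) g x =
      (Dl d ε l g (x + ε • EuclideanSpace.single i 1) - Dl d ε l g x) / ε := rfl

lemma Dl_cons' (ε : ℝ) (i : Fin d) (l : List (Fin d)) (g : Ed d → ℝ) :
    Dl d ε (i :: l) g = fdiff1 d ε i (Dl d ε l g) := rfl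
lemma Pl_cons' (i : Fin d) (l : List (Fin d)) (g : Ed d → ℝ) :
    Pl d (i :: l) g = pderiv1 d i (Pl d l g) := rfl

lemma fdiff1_comm (ε : ℝ) (i j : Fin d) (g : Ed d → ℝ) :
    fdiff1 d ε i (fdiff1 d ε j g) = fdiff1 d ε j (fdiff1 d ε i g) := by
  funext x
  simp only [fdiff1]
  rw [add_right_comm x]
  ring

lemma Dl_fdiff1 (ε : ℝ) (i : Fin d) (l : List (Fin d)) (g : Ed d → ℝ) :
    Dl d ε l (fdiff1 d ε i g) = fdiff1 d ε i (Dl d ε l g) := by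
  induction l with
  | nil => rfl
  | cons j l ih => rw [Dl_cons', ih, fdiff1_comm, ← Dl_cons']

lemma norm_step (ε : ℝ) (hε : 0 < ε) (i : Fin d) :
    ‖ε • (EuclideanSpace.single i (1:ℝ) : Ed d)‖ = ε := by
  rw [norm_smul, PiLp.norm_single]; simp [abs_of_pos hε]

lemma step_mem (ε : ℝ) (hε : 0 < ε) (i : Fin d) {x y : Ed d} {k : ℕ}
    (hy : y ∈ closedBall (x + ε • EuclideanSpace.single i 1) (ε * k)) :
    y ∈ closedBall x (ε * (k + 1 : ℕ)) := by
  rw [mem_closedBall] at *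
  have : dist (x + ε • (EuclideanSpace.single i (1:ℝ) : Ed d)) x = ε := by
    rw [dist_eq_norm, add_sub_cancel_left, norm_step ε hε]
  have := dist_triangle y (x + ε • (EuclideanSpace.single i (1:ℝ) : Ed d)) x
  push_cast
  linarith

lemma cb_mono (ε : ℝ) (hε : 0 < ε) {x y : Ed d} {k : ℕ}
    (hy : y ∈ closedBall x (ε * k)) : y ∈ closedBall x (ε * (k + 1 : ℕ)) := by
  rw [mem_closedBall] at *
  push_cast; nlinarith

lemma Dl_bound (ε : ℝ) (hε : 0 < ε) (g : Ed d → ℝ) (M : ℝ) (l : List (Fin d)) :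
    ∀ x, (∀ y ∈ closedBall x (ε * l.length), |g y| ≤ M) →
      |Dl d ε l g x| ≤ (2 / ε) ^ l.length * M := by
  induction l with
  | nil => intro x h; simpa [Dl] using h x (by simp)
  | cons i l ih =>
    intro x h
    have h1 := ih x (fun y hy => h y (cb_mono ε hε hy))
    have h2 := ih _ (fun y hy => h y (step_mem ε hε i hy))
    rw [Dl_cons, abs_div, abs_of_pos hε, div_le_iff₀ hε]
    have := abs_sub (Dl d ε l g (x + ε • EuclideanSpace.single i 1)) (Dl d ε l g x)
    calc _ ≤ _ := this
      _ ≤ 2 * ((2 / ε) ^ l.length * M) := by linarith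
      _ = _ := by rw [List.length_cons, pow_succ]; field_simp

lemma Dl_add (ε : ℝ) (f g : Ed d → ℝ) (l : List (Fin d)) (x : Ed d) :
    Dl d ε l (fun y => f y + g y) x = Dl d ε l f x + Dl d ε l g x := by
  induction l generalizing x with
  | nil => rfl
  | cons i l ih => simp only [Dl_cons, ih]; ring

lemma Dl_integral (ε : ℝ) (hε : 0 < ε) (g : Ed d → ℝ) (f : Ed d → Ed d → ℝ) (l : List (Fin d)) :
    ∀ x, (∀ z ∈ closedBall x (ε * l.length), Integrable (f z) ∧ g z = ∫ y, f z y) →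
      Integrable (fun y => Dl d ε l (fun z => f z y) x) ∧
      Dl d ε l g x = ∫ y, Dl d ε l (fun z => f z y) x := by
  induction l with
  | nil => intro x h; simpa [Dl] using h x (by simp)
  | cons i l ih =>
    intro x h
    have h1 := ih x (fun y hy => h y (cb_mono ε hε hy))
    have h2 := ih _ (fun y hy => h y (step_mem ε hε i hy))
    simp only [Dl_cons]
    refine ⟨(h2.1.sub h1.1).div_const ε, ?_⟩
    rw [integral_div, integral_sub h2.1 h1.1, h1.2, h2.2]

lemma Dl_const_mul (ε c : ℝ) (g : Ed d → ℝ) (l : List (Fin d)) (x : Ed d) :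
    Dl d ε l (fun y => c * g y) x = c * Dl d ε l g x := by
  induction l generalizing x with
  | nil => rfl
  | cons i l ih => simp only [Dl_cons, ih]; ring

lemma Dl_translate (ε : ℝ) (g : Ed d → ℝ) (l : List (Fin d)) (x a : Ed d) :
    Dl d ε l (fun y => g (y - a)) x = Dl d ε l g (x - a) := by
  induction l generalizing x with
  | nil => rfl
  | cons i l ih =>
    simp only [Dl_cons, ih]
    rw [add_sub_right_comm]

/-! ### Smoothness, mean value -/

lemma pderiv1_contDiffOn {V : Set (Ed d)} (hV : IsOpen V) {g : Ed d → ℝ} (i : Fin d)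
    (hg : ContDiffOn ℝ ∞ g V) : ContDiffOn ℝ ∞ (pderiv1 d i g) V :=
  (hg.fderiv_of_isOpen hV (m := ∞) (by simp)).clm_apply contDiffOn_const

lemma Pl_contDiffOn {V : Set (Ed d)} (hV : IsOpen V) {g : Ed d → ℝ}
    (hg : ContDiffOn ℝ ∞ g V) (l : List (Fin d)) : ContDiffOn ℝ ∞ (Pl d l g) V := by
  induction l with
  | nil => exact hg
  | cons i l ih => exact pderiv1_contDiffOn hV i ih

lemma diffAt {V : Set (Ed d)} (hV : IsOpen V) {g : Ed d → ℝ}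
    (hg : ContDiffOn ℝ ∞ g V) {x : Ed d} (hx : x ∈ V) : DifferentiableAt ℝ g x :=
  (hg.contDiffAt (hV.mem_nhds hx)).differentiableAt (by simp)

lemma ball_step (ε : ℝ) (hε : 0 < ε) (i : Fin d) {x y : Ed d} {R t : ℝ} (h0 : 0 ≤ t) (ht : t ≤ ε)
    (hy : y ∈ ball x (R - ε)) : y + t • EuclideanSpace.single i (1:ℝ) ∈ ball x R := by
  rw [mem_ball] at *
  have : dist (y + t • (EuclideanSpace.single i (1:ℝ) : Ed d)) y = t := by
    rw [dist_eq_norm, add_sub_cancel_left, norm_smul, PiLp.norm_single]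
    simp [abs_of_nonneg h0]
  have := dist_triangle (y + t • (EuclideanSpace.single i (1:ℝ) : Ed d)) y x
  linarith

lemma fdiff1_contDiffOn {x : Ed d} {R ε : ℝ} (hε : 0 < ε) {g : Ed d → ℝ} (i : Fin d)
    (hg : ContDiffOn ℝ ∞ g (ball x R)) : ContDiffOn ℝ ∞ (fdiff1 d ε i g) (ball x (R - ε)) := by
  unfold fdiff1
  refine ContDiffOn.div_const (ContDiffOn.sub ?_ (hg.mono (ball_subset_ball (by linarith)))) _
  exact hg.comp (by fun_prop) (fun y hy => ball_step ε hε i hε.le le_rfl hy)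

lemma Pl_fdiff1 {x : Ed d} {R ε : ℝ} (hε : 0 < ε) {g : Ed d → ℝ} (i : Fin d)
    (hg : ContDiffOn ℝ ∞ g (ball x R)) (l : List (Fin d)) :
    ∀ y ∈ ball x (R - ε), Pl d l (fdiff1 d ε i g) y = fdiff1 d ε i (Pl d l g) y := by
  induction l with
  | nil => intro y _; rfl
  | cons j l ih =>
    intro y hy
    have he : Pl d l (fdiff1 d ε i g) =ᶠ[nhds y] fdiff1 d ε i (Pl d l g) := by
      filter_upwards [isOpen_ball.mem_nhds hy] with z hz using ih z hz
    have hP := Pl_contDiffOn isOpen_ball hg l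
    have d1 : DifferentiableAt ℝ (Pl d l g) y :=
      diffAt isOpen_ball hP (ball_subset_ball (by linarith) hy)
    have d2 : DifferentiableAt ℝ (Pl d l g) (y + ε • EuclideanSpace.single i (1:ℝ)) :=
      diffAt isOpen_ball hP (ball_step ε hε i hε.le le_rfl hy)
    have d2' : HasFDerivAt (fun z => Pl d l g (z + ε • EuclideanSpace.single i (1:ℝ)))
      (fderiv ℝ (Pl d l g) (y + ε • EuclideanSpace.single i (1:ℝ))) y := by
      have h := d2.hasFDerivAt.comp y ((hasFDerivAt_id y).add_const _)
      rw [ContinuousLinearMap.comp_id] at h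
      exact h
    have hd := (d2'.sub d1.hasFDerivAt).const_smul ε⁻¹
    have hd2 : HasFDerivAt (fdiff1 d ε i (Pl d l g)) _ y := hd.congr_of_eventuallyEq
      (Filter.Eventually.of_forall fun z => by simp [fdiff1, div_eq_inv_mul])
    rw [Pl_cons', Pl_cons']
    simp only [pderiv1]
    rw [he.fderiv_eq, hd2.fderiv]
    simp [fdiff1, div_eq_inv_mul, pderiv1]

lemma fdiff1_mvt {x y : Ed d} {R ε : ℝ} (hε : 0 < ε) {g : Ed d → ℝ} (i : Fin d)
    (hg : ContDiffOn ℝ ∞ g (ball x R)) (hy : y ∈ ball x (R - ε)) :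
    ∃ z ∈ closedBall y ε, fdiff1 d ε i g y = pderiv1 d i g z := by
  have hder : ∀ t ∈ Icc (0:ℝ) ε, HasDerivAt (fun t : ℝ => g (y + t • EuclideanSpace.single i (1:ℝ)))
      (pderiv1 d i g (y + t • EuclideanSpace.single i (1:ℝ))) t := by
    intro t ht
    have h1 := (diffAt isOpen_ball hg (ball_step ε hε i ht.1 ht.2 hy)).hasFDerivAt
    have h2 : HasDerivAt (fun t : ℝ => y + t • (EuclideanSpace.single i (1:ℝ) : Ed d))
        (EuclideanSpace.single i (1:ℝ)) t := by
      simpa using ((hasDerivAt_id t).smul_const (EuclideanSpace.single i (1:ℝ) : Ed d)).const_add y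
    exact h1.comp_hasDerivAt t h2
  obtain ⟨c, hc, hc'⟩ := exists_hasDerivAt_eq_slope _ _ hε
    (fun t ht => (hder t ht).continuousAt.continuousWithinAt)
    (fun t ht => hder t (Ioo_subset_Icc_self ht))
  refine ⟨y + c • EuclideanSpace.single i (1:ℝ), ?_, ?_⟩
  · rw [mem_closedBall, dist_eq_norm, add_sub_cancel_left, norm_step c hc.1]; exact hc.2.le
  · rw [hc']; simp [fdiff1]

lemma Dl_mvt (ε : ℝ) (hε : 0 < ε) (l : List (Fin d)) : ∀ (g : Ed d → ℝ) (x : Ed d) (R : ℝ),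
    ContDiffOn ℝ ∞ g (ball x R) → ε * l.length < R →
    ∃ z ∈ closedBall x (ε * l.length), Dl d ε l g x = Pl d l g z := by
  induction l with
  | nil => intro g x R _ _; exact ⟨x, by simp, rfl⟩
  | cons i l ih =>
    intro g x R hg hR
    simp only [List.length_cons] at hR ⊢
    push_cast at hR ⊢
    obtain ⟨z, hz, hz'⟩ := ih (fdiff1 d ε i g) x (R - ε) (fdiff1_contDiffOn hε i hg) (by linarith)
    have hzb : z ∈ ball x (R - ε) := by
      rw [mem_closedBall] at hz; rw [mem_ball]; linarith
    rw [Pl_fdiff1 hε i hg l z hzb] at hz'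
    obtain ⟨w, hw, hw'⟩ := fdiff1_mvt hε i (Pl_contDiffOn isOpen_ball hg l) hzb
    refine ⟨w, ?_, ?_⟩
    · rw [mem_closedBall] at *
      have := dist_triangle w z x
      linarith
    · rw [Dl_cons', ← Dl_fdiff1, hz', hw', Pl_cons']

/-! ### The kernel -/

/-- The kernel `|z|^{-q}`. -/
def Phi (d : ℕ) (q : ℝ) : Ed d → ℝ := fun z => ‖z‖ ^ (-q)

lemma Phi_contDiffOn (q : ℝ) : ContDiffOn ℝ ∞ (Phi d q) {0}ᶜ := by
  intro z hz
  have h1 : ContDiffAt ℝ ∞ (fun z : Ed d => ‖z‖) z := contDiffAt_norm ℝ hz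
  exact (h1.rpow_const_of_ne (norm_ne_zero_iff.mpr hz)).contDiffWithinAt

lemma Pl_hom (q : ℝ) (c : ℝ) (hc : 0 < c) (l : List (Fin d)) :
    ∀ z, Pl d l (Phi d q) (c • z) = c ^ (-(q + l.length)) * Pl d l (Phi d q) z := by
  induction l with
  | nil =>
    intro z
    simp only [Pl, List.foldr_nil, Phi, norm_smul, Real.norm_eq_abs, abs_of_pos hc,
      List.length_nil, Nat.cast_zero, add_zero]
    rw [Real.mul_rpow hc.le (norm_nonneg _)]
  | cons i l ih =>
    intro z
    have h1 : fderiv ℝ (fun z => Pl d l (Phi d q) (c • z)) z = c • fderiv ℝ (Pl d l (Phi d q)) (c • z) :=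
      fderiv_comp_smul c
    have h2 : (fun z => Pl d l (Phi d q) (c • z)) =
      (c ^ (-(q + l.length))) • (Pl d l (Phi d q)) := funext ih
    rw [h2, fderiv_const_smul_field] at h1
    have h3 := congrArg (fun L => L (EuclideanSpace.single i (1:ℝ))) h1
    simp only [FunLike.coe_smul, Pi.smul_apply, smul_eq_mul] at h3
    rw [Pl_cons']
    simp only [pderiv1, List.length_cons]
    have h4 : c ^ (-(q + ((l.length + 1 : ℕ) : ℝ))) * c = c ^ (-(q + l.length)) := by
      nth_rewrite 2 [← Real.rpow_one c]
      rw [← Real.rpow_add hc]; congr 1; push_cast; ring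
    rw [← h4] at h3
    apply mul_left_cancel₀ hc.ne'
    rw [← h3]; ring

lemma Pl_neg (q : ℝ) (l : List (Fin d)) :
    ∀ z, Pl d l (Phi d q) (-z) = (-1) ^ l.length * Pl d l (Phi d q) z := by
  induction l with
  | nil => intro z; simp [Pl, Phi]
  | cons i l ih =>
    intro z
    have h1 : fderiv ℝ (fun z => Pl d l (Phi d q) ((-1:ℝ) • z)) z =
        (-1:ℝ) • fderiv ℝ (Pl d l (Phi d q)) ((-1:ℝ) • z) :=
      fderiv_comp_smul (-1:ℝ)
    have h2 : (fun z => Pl d l (Phi d q) ((-1:ℝ) • z)) =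
      ((-1:ℝ) ^ l.length) • (Pl d l (Phi d q)) := by
        funext z; rw [neg_one_smul, ih]; rfl
    rw [h2, fderiv_const_smul_field] at h1
    have h3 := congrArg (fun L => L (EuclideanSpace.single i (1:ℝ))) h1
    simp only [FunLike.coe_smul, Pi.smul_apply, smul_eq_mul, neg_one_smul, FunLike.coe_neg, Pi.neg_apply] at h3
    rw [Pl_cons']
    simp only [pderiv1, List.length_cons]
    rw [pow_succ]
    linarith

lemma Pl_bound (q : ℝ) (l : List (Fin d)) :
    ∃ C : ℝ, 0 ≤ C ∧ ∀ z : Ed d, z ≠ 0 → |Pl d l (Phi d q) z| ≤ C * ‖z‖ ^ (-(q + l.length)) := by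
  have hc : ContinuousOn (Pl d l (Phi d q)) (sphere 0 1) :=
    (Pl_contDiffOn isOpen_compl_singleton (Phi_contDiffOn q) l).continuousOn.mono
      (fun z hz h => by simp [mem_singleton_iff.mp h] at hz)
  obtain ⟨C, hC⟩ := (isCompact_sphere (0 : Ed d) 1).exists_bound_of_continuousOn hc
  refine ⟨max C 0, le_max_right _ _, fun z hz => ?_⟩
  have hz' : 0 < ‖z‖ := norm_pos_iff.mpr hz
  have h1 : z = ‖z‖ • (‖z‖⁻¹ • z) := by rw [smul_smul, mul_inv_cancel₀ hz'.ne', one_smul]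
  have h2 := hC (‖z‖⁻¹ • z) (by simp [norm_smul, hz'.ne'])
  have h3 := Pl_hom q ‖z‖ hz' l (‖z‖⁻¹ • z)
  rw [← h1] at h3
  rw [h3, abs_mul, abs_of_nonneg (Real.rpow_nonneg hz'.le _), mul_comm]
  gcongr
  exact h2.trans (le_max_left _ _)

lemma Pl_measurable (q : ℝ) (l : List (Fin d)) : Measurable (Pl d l (Phi d q)) := by
  cases l with
  | nil => exact (measurable_norm.pow_const _)
  | cons i l => exact measurable_fderiv_apply_const ℝ _ _

/-! ### The nonlinearity -/

lemma abs_Jp {p : ℝ} (hp : 1 < p) (t : ℝ) : |Jp p t| = |t| ^ (p - 1) := by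
  rcases eq_or_ne t 0 with rfl | ht
  · simp [Jp, Real.zero_rpow (by linarith : p - 1 ≠ 0)]
  · have := abs_pos.mpr ht
    rw [Jp, abs_mul, abs_of_nonneg (Real.rpow_nonneg (abs_nonneg _) _)]
    nth_rewrite 2 [← Real.rpow_one |t|]
    rw [← Real.rpow_add this]; congr 1; ring

lemma Jp_measurable (p : ℝ) : Measurable (Jp p) := by
  unfold Jp
  exact (measurable_id.abs.pow_const _).mul measurable_id

lemma Jp_mul (p a b : ℝ) : Jp p (a * b) = Jp p a * Jp p b := by
  unfold Jp
  rw [abs_mul, Real.mul_rpow (abs_nonneg _) (abs_nonneg _)]; ring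

lemma Jp_neg (p a : ℝ) : Jp p (-a) = - Jp p a := by simp [Jp]

lemma Jp_one (p : ℝ) : Jp p 1 = 1 := by simp [Jp]

lemma Jp_diff {p : ℝ} (hp : 1 < p) : ∃ a0 > 0, ∃ C ≥ 0, ∃ m : ℝ, m > 0 ∧ ∀ a b : ℝ, |a| ≤ a0 →
    |Jp p (a - b) + Jp p b| ≤ C * |a| ^ m * (1 + |b| ^ (p - 1)) := by
  have hd : DifferentiableAt ℝ (Jp p) 1 := by
    have : DifferentiableAt ℝ (fun t : ℝ => t ^ (p - 2) * t) 1 :=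
      (DifferentiableAt.rpow_const differentiableAt_id (Or.inl one_ne_zero)).mul differentiableAt_id
    refine this.congr_of_eventuallyEq ?_
    filter_upwards [lt_mem_nhds (zero_lt_one (α := ℝ))] with t ht
    rw [Jp, abs_of_pos ht]
  have hO := hd.isBigO_sub
  obtain ⟨C, hC0, hC⟩ := hO.exists_pos
  obtain ⟨δ, hδ, hδ'⟩ := Metric.eventually_nhds_iff.mp hC.bound
  set m : ℝ := min 1 (p - 1) / 2 with hm
  have hm0 : 0 < m := by
    have : 0 < min 1 (p - 1) := lt_min one_pos (by linarith)
    positivity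
  have hm1 : m ≤ 1 / 2 := by
    have : min 1 (p - 1) ≤ 1 := min_le_left _ _
    linarith
  have hm2 : m ≤ (p - 1) / 2 := by
    have : min 1 (p - 1) ≤ p - 1 := min_le_right _ _
    linarith
  refine ⟨min 1 ((δ / 2) ^ 2), by positivity, C + 2 * 2 ^ (p - 1), by positivity, m, hm0, ?_⟩
  intro a b ha
  have ha1 : |a| ≤ 1 := ha.trans (min_le_left _ _)
  have ha2 : |a| ≤ (δ / 2) ^ 2 := ha.trans (min_le_right _ _)
  have hbp : 0 ≤ |b| ^ (p - 1) := Real.rpow_nonneg (abs_nonneg _) _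
  have ham : 0 ≤ |a| ^ m := Real.rpow_nonneg (abs_nonneg _) _
  set r := √|a| with hr
  have hr0 : 0 ≤ r := Real.sqrt_nonneg _
  have hrr : r * r = |a| := Real.mul_self_sqrt (abs_nonneg _)
  have hr1 : r ≤ 1 := by nlinarith
  have hrd : r ≤ δ / 2 := by
    rw [hr]; exact Real.sqrt_le_iff.mpr ⟨by positivity, ha2⟩
  rcases eq_or_ne a 0 with rfl | ha0
  · simp only [zero_sub, Jp_neg, neg_add_cancel, abs_zero]
    positivity
  have hapos := abs_pos.mpr ha0
  have hrpow : ∀ e : ℝ, m ≤ e / 2 → r ^ e ≤ |a| ^ m := by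
    intro e he
    rw [hr, Real.sqrt_eq_rpow, ← Real.rpow_mul (abs_nonneg _)]
    exact Real.rpow_le_rpow_of_exponent_ge hapos ha1 (by linarith)
  rcases le_or_gt |b| r with hb | hb
  · have h1 : |Jp p (a - b)| ≤ 2 ^ (p - 1) * |a| ^ m := by
      rw [abs_Jp hp]
      have : |a - b| ≤ 2 * r := (abs_sub a b).trans (by nlinarith)
      calc |a - b| ^ (p - 1) ≤ (2 * r) ^ (p - 1) :=
            Real.rpow_le_rpow (abs_nonneg _) this (by linarith)
        _ = 2 ^ (p - 1) * r ^ (p - 1) := Real.mul_rpow (by norm_num) hr0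
        _ ≤ _ := by gcongr; exact hrpow _ hm2
    have h2 : |Jp p b| ≤ 2 ^ (p - 1) * |a| ^ m := by
      rw [abs_Jp hp]
      calc |b| ^ (p - 1) ≤ (2 * r) ^ (p - 1) :=
            Real.rpow_le_rpow (abs_nonneg _) (by linarith) (by linarith)
        _ = 2 ^ (p - 1) * r ^ (p - 1) := Real.mul_rpow (by norm_num) hr0
        _ ≤ _ := by gcongr; exact hrpow _ hm2
    calc _ ≤ _ := abs_add_le _ _
      _ ≤ 2 * 2 ^ (p - 1) * |a| ^ m * 1 := by linarith
      _ ≤ _ := by gcongr <;> linarith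
  · have hb0 : b ≠ 0 := by rintro rfl; simp at hb; linarith
    have hbpos := abs_pos.mpr hb0
    have hab : |a / b| ≤ r := by
      rw [abs_div, div_le_iff₀ hbpos, ← hrr]; gcongr
    have h1 : Jp p (a - b) + Jp p b = - (Jp p b * (Jp p (1 - a / b) - Jp p 1)) := by
      have : a - b = -(b * (1 - a / b)) := by field_simp; ring
      rw [this, Jp_neg, Jp_mul, Jp_one]; ring
    have h2 := hδ' (y := 1 - a / b) (by
      rw [Real.dist_eq, sub_sub_cancel_left, abs_neg]; linarith)
    simp only [Real.norm_eq_abs, sub_sub_cancel_left, abs_neg] at h2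
    rw [h1, abs_neg, abs_mul, abs_Jp hp]
    have h3 : r ≤ |a| ^ m := by simpa using hrpow 1 hm1
    calc |b| ^ (p - 1) * |Jp p (1 - a / b) - Jp p 1| ≤ |b| ^ (p - 1) * (C * |a| ^ m) := by
          gcongr
          exact h2.trans (by gcongr; linarith)
      _ = C * |a| ^ m * |b| ^ (p - 1) := by ring
      _ ≤ _ := by
        have : (0:ℝ) ≤ 2 * 2 ^ (p - 1) := by positivity
        gcongr <;> linarith

/-! ### Estimates -/

lemma vanish {u : Ed d → ℝ} (hvan : ∀ n : ℕ, u =O[nhds (0 : Ed d)] fun x => ‖x‖ ^ n) (n : ℕ) :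
    ∃ r > 0, r ≤ 1 ∧ ∃ C > 0, ∀ y, ‖y‖ < r → |u y| ≤ C * ‖y‖ ^ n := by
  obtain ⟨C, hC0, hC⟩ := (hvan n).exists_pos
  obtain ⟨δ, hδ, hδ'⟩ := Metric.eventually_nhds_iff.mp hC.bound
  refine ⟨min δ 1, by positivity, min_le_right _ _, C, hC0, fun y hy => ?_⟩
  have := hδ' (y := y) (by rw [dist_zero_right]; exact hy.trans_le (min_le_left _ _))
  simpa using this

lemma u_zero {u : Ed d → ℝ} (hvan : ∀ n : ℕ, u =O[nhds (0 : Ed d)] fun x => ‖x‖ ^ n) :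
    u 0 = 0 := by
  obtain ⟨r, hr, -, C, -, h⟩ := vanish hvan 1
  have := h 0 (by simpa using hr)
  simpa using this

/-- The dominating tail weight. -/
def W (d : ℕ) (q p : ℝ) (u : Ed d → ℝ) : Ed d → ℝ :=
  fun y => (1 + |u y| ^ (p - 1)) * (1 + ‖y‖) ^ (-q)

/-- The local singular weight. -/
def S (d : ℕ) (η : ℝ) : Ed d → ℝ := (ball 0 1).indicator (fun z => ‖z‖ ^ (-((d : ℝ) - η)))

lemma W_nonneg (q p : ℝ) (u : Ed d → ℝ) (y : Ed d) : 0 ≤ W d q p u y := by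
  unfold W; positivity

lemma S_nonneg (η : ℝ) (y : Ed d) : 0 ≤ S d η y :=
  indicator_nonneg (fun _ _ => by positivity) _

lemma W_integrable {s p : ℝ} (hsp : 0 < s * p) {u : Ed d → ℝ} (hu : memTail d s p u) :
    Integrable (W d ((d : ℝ) + s * p) p u) := by
  have h1 : Integrable (fun y : Ed d => (1 + ‖y‖) ^ (-((d : ℝ) + s * p))) :=
    integrable_one_add_norm (by simp [hsp])
  refine (h1.add hu.2).congr (Filter.Eventually.of_forall fun y => ?_)
  simp only [Pi.add_apply, W]
  rw [Real.rpow_neg (by positivity)]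
  ring

lemma S_integrable (hd : 1 ≤ d) {η : ℝ} (hη : 0 < η) : Integrable (S d η) := by
  unfold S
  rw [integrable_indicator_iff measurableSet_ball]
  refine integrableOn_ball_of_norm_le_rpow (C := 1) (α := (d : ℝ) - η) (by simpa using hd)
    (by simp [hη]) (Filter.Eventually.of_forall fun x => ?_)
    (measurable_norm.pow_const _).aestronglyMeasurable
  rw [one_mul, Real.norm_of_nonneg (by positivity)]

lemma far_weight {q r : ℝ} (hq : 0 ≤ q) (hr : 0 < r) {y : Ed d} (hy : r ≤ ‖y‖) :
    ‖y‖ ^ (-q) ≤ (1 + 1 / r) ^ q * (1 + ‖y‖) ^ (-q) := by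
  have hy0 : 0 < ‖y‖ := hr.trans_le hy
  have h1 : (1 + ‖y‖) ≤ (1 + 1 / r) * ‖y‖ := by
    have : 1 ≤ 1 / r * ‖y‖ := by rw [one_div, ← div_eq_inv_mul, le_div_iff₀ hr]; linarith
    linarith
  have h2 : ((1 + 1 / r) * ‖y‖) ^ (-q) ≤ (1 + ‖y‖) ^ (-q) :=
    Real.rpow_le_rpow_of_nonpos (by positivity) h1 (by linarith)
  rw [Real.mul_rpow (by positivity) hy0.le] at h2
  calc ‖y‖ ^ (-q) = (1 + 1 / r) ^ q * ((1 + 1 / r) ^ (-q) * ‖y‖ ^ (-q)) := by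
        rw [← mul_assoc, ← Real.rpow_add (by positivity), add_neg_cancel, Real.rpow_zero, one_mul]
    _ ≤ _ := by gcongr

lemma weight_bound {q p : ℝ} (hq : 0 ≤ q) (hp : 1 < p) {u : Ed d → ℝ}
    (hvan : ∀ n : ℕ, u =O[nhds (0 : Ed d)] fun x => ‖x‖ ^ n) {m : ℝ} (hm : 0 ≤ m) :
    ∃ C ≥ 0, ∀ y, |u y| ^ (p - 1) * ‖y‖ ^ (-(q + m)) ≤ C * W d q p u y := by
  obtain ⟨n, hn⟩ := exists_nat_ge ((q + m) / (p - 1))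
  have hp1 : 0 < p - 1 := by linarith
  rw [div_le_iff₀ hp1] at hn
  obtain ⟨r, hr, hr1, C, hC, h⟩ := vanish hvan n
  refine ⟨max (C ^ (p - 1) * 2 ^ q) (r ^ (-m) * (1 + 1 / r) ^ q), by positivity, fun y => ?_⟩
  rcases eq_or_ne y 0 with rfl | hy0
  · rw [u_zero hvan, abs_zero, Real.zero_rpow hp1.ne', zero_mul]
    exact mul_nonneg (by positivity) (W_nonneg _ _ _ _)
  have hyp := norm_pos_iff.mpr hy0
  have hup : 0 ≤ |u y| ^ (p - 1) := by positivity
  rcases lt_or_ge ‖y‖ r with hy | hy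
  · have h1 : |u y| ^ (p - 1) ≤ C ^ (p - 1) * ‖y‖ ^ (n * (p - 1)) := by
      calc _ ≤ (C * ‖y‖ ^ n) ^ (p - 1) := Real.rpow_le_rpow (abs_nonneg _) (h y hy) hp1.le
        _ = _ := by
          rw [Real.mul_rpow hC.le (by positivity), ← Real.rpow_natCast, ← Real.rpow_mul hyp.le]
    have h2 : ‖y‖ ^ (n * (p - 1)) * ‖y‖ ^ (-(q + m)) ≤ 1 := by
      rw [← Real.rpow_add hyp]
      exact Real.rpow_le_one hyp.le (by linarith) (by linarith)
    have h3 : 1 ≤ 2 ^ q * (1 + ‖y‖) ^ (-q) := by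
      rw [Real.rpow_neg (by positivity), ← div_eq_mul_inv, le_div_iff₀ (by positivity), one_mul]
      exact Real.rpow_le_rpow (by positivity) (by linarith) hq
    calc _ ≤ C ^ (p - 1) * ‖y‖ ^ (n * (p - 1)) * ‖y‖ ^ (-(q + m)) := by gcongr
      _ = C ^ (p - 1) * (‖y‖ ^ (n * (p - 1)) * ‖y‖ ^ (-(q + m))) := by ring
      _ ≤ C ^ (p - 1) * (2 ^ q * (1 + ‖y‖) ^ (-q)) := by exact mul_le_mul_of_nonneg_left (h2.trans h3) (by positivity)
      _ = (C ^ (p - 1) * 2 ^ q) * (1 * (1 + ‖y‖) ^ (-q)) := by ring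
      _ ≤ _ := by
        unfold W
        gcongr
        · exact le_max_left _ _
        · linarith
  · have h1 : ‖y‖ ^ (-(q + m)) ≤ r ^ (-m) * ((1 + 1 / r) ^ q * (1 + ‖y‖) ^ (-q)) := by
      rw [neg_add, add_comm, Real.rpow_add hyp]
      exact mul_le_mul (Real.rpow_le_rpow_of_nonpos hr hy (by linarith)) (far_weight hq hr hy)
        (by positivity) (by positivity)
    calc _ ≤ |u y| ^ (p - 1) * (r ^ (-m) * ((1 + 1 / r) ^ q * (1 + ‖y‖) ^ (-q))) := by gcongr
      _ = (r ^ (-m) * (1 + 1 / r) ^ q) * (|u y| ^ (p - 1) * (1 + ‖y‖) ^ (-q)) := by ring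
      _ ≤ _ := by
        unfold W
        gcongr
        · exact le_max_right _ _
        · linarith

lemma pow_gain {A ε e N : ℝ} {n : ℕ} (hA : 0 ≤ A) (hε : 0 < ε) (hε1 : ε ≤ 1)
    (hn : N ≤ n * e) : (A * ε ^ n) ^ e ≤ A ^ e * ε ^ N := by
  rw [Real.mul_rpow hA (by positivity), ← Real.rpow_natCast, ← Real.rpow_mul hε.le]
  gcongr ?_ * ?_
  exact Real.rpow_le_rpow_of_exponent_ge hε hε1 hn

/-- cut-off outer part of the integrand -/
def G (d : ℕ) (q p : ℝ) (u : Ed d → ℝ) (ρ : ℝ) (x y : Ed d) : ℝ :=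
  ({y : Ed d | ρ < ‖y‖}.indicator (fun y => Jp p (u y)) y) * Phi d q (x - y)

set_option maxHeartbeats 2000000 in
lemma err_bound {s p : ℝ} (hsp : 0 < s * p) (hp : 1 < p)
    {Ω : Set (Ed d)} (h0Ω : (0 : Ed d) ∈ Ω) {u : Ed d → ℝ}
    {β : ℝ} (hβ : s * p / (p - 1) < β)
    (hreg : ∀ x ∈ Ω, ∃ r > 0, ball x r ⊆ Ω ∧
      ∃ C : ℝ≥0, HolderOnWith C β.toNNReal u (ball x r))
    (hvan : ∀ n : ℕ, u =O[nhds (0 : Ed d)] fun x => ‖x‖ ^ n) (k : ℕ) :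
    ∃ η > 0, ∃ ε0 > 0, ∃ C ≥ 0, ∀ ε, 0 < ε → ε < ε0 → ∀ x : Ed d, ‖x‖ ≤ ε * k → x ∈ Ω ∧ ∀ y,
      |Jp p (u x - u y) * Phi d (d + s * p) (x - y) + G d (d + s * p) p u ((2 * k + 1) * ε) x y| ≤
        C * ε ^ (k + 1) * (W d (d + s * p) p u y + S d η (x - y)) := by
  set q : ℝ := d + s * p with hqdef
  have hq : 0 < q := by positivity
  have hp1 : 0 < p - 1 := by linarith
  have hβ0 : 0 < β := lt_trans (by positivity) hβ
  rw [div_lt_iff₀ hp1] at hβ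
  obtain ⟨a0, ha0, C1, hC1, m, hm, hJ⟩ := Jp_diff hp
  obtain ⟨t, ht1, ht2⟩ : ∃ t, s * p / (β * (p - 1)) < t ∧ t < 1 :=
    exists_between ((div_lt_one (by positivity)).mpr hβ)
  have ht0 : 0 < t := lt_trans (by positivity) ht1
  rw [div_lt_iff₀ (by positivity)] at ht1
  set η := t * (β * (p - 1)) - s * p with hη
  have hη0 : 0 < η := by linarith
  set e2 := (1 - t) * (p - 1) with he2
  have he20 : 0 < e2 := mul_pos (by linarith) hp1
  obtain ⟨n, hn⟩ := exists_nat_ge (((k : ℝ) + 1 + q) / min m e2)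
  rw [div_le_iff₀ (lt_min hm he20)] at hn
  have hnm : (k : ℝ) + 1 + q ≤ n * m := hn.trans (by gcongr; exact min_le_left _ _)
  have hne : (k : ℝ) + 1 ≤ n * e2 := by
    have : (n : ℝ) * min m e2 ≤ n * e2 := by gcongr; exact min_le_right _ _
    linarith
  obtain ⟨r, hr, hr1, C2, hC2, hv⟩ := vanish hvan n
  obtain ⟨r1, hr10, hr11, C3, hC3, hv1⟩ := vanish hvan 1
  obtain ⟨r2, hr2, hr2Ω, H, hH⟩ := hreg 0 h0Ω
  set K : ℝ := 3 * k + 1 with hK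
  have hKpos : 0 < K := by positivity
  set A : ℝ := C2 * K ^ n with hA
  have hApos : 0 < A := by positivity
  refine ⟨η, hη0, min 1 (min (min r (min r1 (a0 / C3))) (min r2 1)) / K, by positivity,
    max (H ^ (t * (p - 1)) * (2 * A) ^ e2) (C1 * A ^ m * 4 ^ q), by positivity, ?_⟩
  intro ε hε hεlt x hx
  rw [lt_div_iff₀ hKpos] at hεlt
  simp only [lt_min_iff] at hεlt
  obtain ⟨hK1, ⟨hKr, hKr1, hKa⟩, hKr2, -⟩ := hεlt
  have hk0 : (0:ℝ) ≤ k := Nat.cast_nonneg k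
  have hxK : ‖x‖ ≤ ε * K := hx.trans (by gcongr; rw [hK]; linarith)
  have hε1 : ε ≤ 1 := by
    have : ε * 1 ≤ ε * K := by gcongr; rw [hK]; linarith
    linarith
  have hsmall : ∀ z : Ed d, ‖z‖ ≤ ε * K → |u z| ≤ A * ε ^ n := by
    intro z hz
    calc _ ≤ C2 * ‖z‖ ^ n := hv z (by linarith)
      _ ≤ C2 * (ε * K) ^ n := by gcongr
      _ = _ := by rw [hA]; ring
  have hεk : ε ^ ((k:ℝ) + 1) = ε ^ (k + 1) := by
    rw [← Real.rpow_natCast]; push_cast; rfl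
  refine ⟨hr2Ω (by rw [mem_ball_zero_iff]; linarith), fun y => ?_⟩
  have hWn := W_nonneg q p u y
  have hSn := S_nonneg (d := d) η (x - y)
  rcases lt_or_ge ((2 * k + 1) * ε) ‖y‖ with hy | hy
  · -- outer region
    have hG : G d q p u ((2 * k + 1) * ε) x y = Jp p (u y) * Phi d q (x - y) := by
      rw [G, indicator_of_mem (by exact hy)]
    rw [hG, ← add_mul, abs_mul]
    have hy0 : 0 < ‖y‖ := lt_trans (by positivity) hy
    have hux : |u x| ≤ a0 := by
      calc _ ≤ C3 * ‖x‖ ^ 1 := hv1 x (by linarith)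
        _ = ‖x‖ * C3 := by ring
        _ ≤ (ε * K) * C3 := by gcongr
        _ ≤ a0 := by rw [lt_div_iff₀ hC3] at hKa; exact hKa.le
    have h1 := hJ (u x) (u y) hux
    have h2 : |u x| ^ m ≤ A ^ m * ε ^ ((k:ℝ) + 1 + q) :=
      (Real.rpow_le_rpow (abs_nonneg _) (hsmall x hxK) hm.le).trans
        (pow_gain hApos.le hε hε1 hnm)
    have hxy : ‖y‖ / 2 ≤ ‖x - y‖ := by
      have := norm_sub_norm_le y x
      rw [norm_sub_rev] at this
      linarith
    have h3 : |Phi d q (x - y)| ≤ 4 ^ q * ε ^ (-q) * (1 + ‖y‖) ^ (-q) := by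
      rw [Phi, abs_of_nonneg (by positivity)]
      have h31 : ε ≤ ‖y‖ := by nlinarith
      have h32 : (1 + 1 / ε) ≤ 2 * ε⁻¹ := by
        have : 1 ≤ ε⁻¹ := (one_le_inv₀ hε).mpr hε1
        rw [one_div]; linarith
      calc ‖x - y‖ ^ (-q) ≤ (‖y‖ / 2) ^ (-q) :=
            Real.rpow_le_rpow_of_nonpos (by positivity) hxy (by linarith)
        _ = 2 ^ q * ‖y‖ ^ (-q) := by
            rw [Real.div_rpow hy0.le (by norm_num), Real.rpow_neg (by norm_num : (0:ℝ) ≤ 2)]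
            field_simp
        _ ≤ 2 ^ q * ((2 * ε⁻¹) ^ q * (1 + ‖y‖) ^ (-q)) := by
            gcongr
            refine (far_weight hq.le hε h31).trans ?_
            gcongr
        _ = _ := by
            rw [Real.mul_rpow (by norm_num) (by positivity), Real.inv_rpow hε.le,
              ← Real.rpow_neg hε.le, (by norm_num : (4:ℝ) = 2 * 2),
              Real.mul_rpow (by norm_num) (by norm_num)]
            ring
    calc _ ≤ (C1 * (A ^ m * ε ^ ((k:ℝ) + 1 + q)) * (1 + |u y| ^ (p - 1))) *
            (4 ^ q * ε ^ (-q) * (1 + ‖y‖) ^ (-q)) := by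
          gcongr
          refine h1.trans ?_
          gcongr
      _ = (C1 * A ^ m * 4 ^ q) * (ε ^ ((k:ℝ) + 1 + q) * ε ^ (-q)) * W d q p u y := by
          unfold W; ring
      _ = (C1 * A ^ m * 4 ^ q) * ε ^ (k + 1) * W d q p u y := by
          rw [← Real.rpow_add hε, add_neg_cancel_right, hεk]
      _ ≤ _ := by
          gcongr
          · exact le_max_right _ _
          · linarith
  · -- inner region
    have hG : G d q p u ((2 * k + 1) * ε) x y = 0 := by
      rw [G, indicator_of_notMem (by simpa using hy), zero_mul]
    rw [hG, add_zero, abs_mul, abs_Jp hp]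
    have hRHS : 0 ≤ max (↑H ^ (t * (p - 1)) * (2 * A) ^ e2) (C1 * A ^ m * 4 ^ q) * ε ^ (k + 1) *
        (W d q p u y + S d η (x - y)) := by positivity
    rcases eq_or_ne x y with rfl | hxy
    · rw [sub_self, abs_zero, Real.zero_rpow hp1.ne', zero_mul]; exact hRHS
    have hz : 0 < ‖x - y‖ := norm_pos_iff.mpr (sub_ne_zero.mpr hxy)
    have hyK : ‖y‖ ≤ ε * K := by rw [hK]; nlinarith
    have hzK : ‖x - y‖ ≤ ε * K := by
      have := norm_sub_le x y
      rw [hK]; nlinarith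
    set D := |u x - u y| with hD
    have hD0 : 0 ≤ D := abs_nonneg _
    have hD1 : D ≤ H * ‖x - y‖ ^ β := by
      have := hH.dist_le (x := x) (y := y) (by rw [mem_ball_zero_iff]; linarith)
        (by rw [mem_ball_zero_iff]; linarith)
      rwa [Real.dist_eq, dist_eq_norm, Real.coe_toNNReal _ hβ0.le] at this
    have hD2 : D ≤ (2 * A) * ε ^ n := by
      have := abs_sub (u x) (u y)
      have h1 := hsmall x hxK
      have h2 := hsmall y hyK
      linarith
    have hDp : D ^ (p - 1) = D ^ (t * (p - 1)) * D ^ e2 := by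
      rw [← Real.rpow_add_of_nonneg hD0 (by positivity) he20.le]
      congr 1; rw [he2]; ring
    have h1 : D ^ (t * (p - 1)) ≤ H ^ (t * (p - 1)) * ‖x - y‖ ^ (t * (β * (p - 1))) := by
      calc _ ≤ (H * ‖x - y‖ ^ β) ^ (t * (p - 1)) := Real.rpow_le_rpow hD0 hD1 (by positivity)
        _ = _ := by
          rw [Real.mul_rpow (by positivity) (by positivity), ← Real.rpow_mul hz.le]
          congr 2; ring
    have h2 : D ^ e2 ≤ (2 * A) ^ e2 * ε ^ (k + 1) := by
      rw [← hεk]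
      exact (Real.rpow_le_rpow hD0 hD2 he20.le).trans (pow_gain (by positivity) hε hε1 hne)
    have hS : ‖x - y‖ ^ (t * (β * (p - 1))) * ‖x - y‖ ^ (-q) = S d η (x - y) := by
      rw [S, indicator_of_mem (by rw [mem_ball_zero_iff]; linarith), ← Real.rpow_add hz]
      congr 1; rw [hη, hqdef]; ring
    rw [hDp, Phi, abs_of_nonneg (by positivity)]
    calc _ ≤ (H ^ (t * (p - 1)) * ‖x - y‖ ^ (t * (β * (p - 1)))) * ((2 * A) ^ e2 * ε ^ (k + 1)) *
          ‖x - y‖ ^ (-q) := by gcongr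
      _ = (H ^ (t * (p - 1)) * (2 * A) ^ e2) * ε ^ (k + 1) *
          (‖x - y‖ ^ (t * (β * (p - 1))) * ‖x - y‖ ^ (-q)) := by ring
      _ = (H ^ (t * (p - 1)) * (2 * A) ^ e2) * ε ^ (k + 1) * S d η (x - y) := by rw [hS]
      _ ≤ _ := by
          gcongr
          · exact le_max_left _ _
          · linarith

/-! ### Principal values and conclusion -/

lemma pv_eq {s p : ℝ} {u : Ed d → ℝ} {x : Ed d} {L : ℝ}
    (h : fracPLapAt d s p u x L)
    (hi : Integrable (fun y => Jp p (u x - u y) * Phi d (d + s * p) (x - y))) :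
    L = ∫ y, Jp p (u x - u y) * Phi d (d + s * p) (x - y) := by
  refine tendsto_nhds_unique h ?_
  set F : Ed d → ℝ := fun y => Jp p (u x - u y) * Phi d (d + s * p) (x - y) with hF
  have hms : ∀ δ : ℝ, MeasurableSet {y : Ed d | δ < ‖x - y‖} := fun δ =>
    measurableSet_lt measurable_const (by fun_prop)
  have hEq : (fun δ : ℝ => ∫ y in {y : Ed d | δ < ‖x - y‖},
      Jp p (u x - u y) / ‖x - y‖ ^ ((d : ℝ) + s * p)) =
      fun δ => ∫ y, {y : Ed d | δ < ‖x - y‖}.indicator F y := by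
    funext δ
    rw [integral_indicator (hms δ)]
    congr 1; funext y
    rw [hF]; simp only [Phi]
    rw [Real.rpow_neg (norm_nonneg _), div_eq_mul_inv]
  rw [hEq]
  refine tendsto_integral_filter_of_dominated_convergence (fun y => ‖F y‖)
    (Filter.Eventually.of_forall fun δ => (hi.1.indicator (hms δ)))
    (Filter.Eventually.of_forall fun δ => Filter.Eventually.of_forall fun y =>
      norm_indicator_le_norm_self _ _) hi.norm
    (Filter.Eventually.of_forall fun y => ?_)
  rcases eq_or_ne x y with rfl | hxy
  · have : F x = 0 := by simp [hF, Jp]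
    change Tendsto _ _ (nhds (F x))
    rw [this]
    refine tendsto_const_nhds.congr fun δ => ?_
    by_cases hx : x ∈ {y : Ed d | δ < ‖x - y‖}
    · rw [indicator_of_mem hx, this]
    · rw [indicator_of_notMem hx]
  · have hz : 0 < ‖x - y‖ := norm_pos_iff.mpr (sub_ne_zero.mpr hxy)
    refine tendsto_const_nhds.congr' ?_
    filter_upwards [mem_nhdsWithin_of_mem_nhds (Iio_mem_nhds hz)] with δ hδ
    rw [indicator_of_mem (by exact hδ)]

lemma Phi_half {q ρ : ℝ} (hq : 0 ≤ q) {x y : Ed d} (hρ : 0 ≤ ρ) (hx : 2 * ‖x‖ ≤ ρ)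
    (hy : ρ < ‖y‖) : |Phi d q (x - y)| ≤ 2 ^ q * ‖y‖ ^ (-q) := by
  have hy0 : 0 < ‖y‖ := hρ.trans_lt hy
  have hxy : ‖y‖ / 2 ≤ ‖x - y‖ := by
    have := norm_sub_norm_le y x
    rw [norm_sub_rev] at this
    linarith
  rw [Phi, abs_of_nonneg (by positivity)]
  calc ‖x - y‖ ^ (-q) ≤ (‖y‖ / 2) ^ (-q) :=
        Real.rpow_le_rpow_of_nonpos (by positivity) hxy (by linarith)
    _ = 2 ^ q * ‖y‖ ^ (-q) := by
        rw [Real.div_rpow hy0.le (by norm_num), Real.rpow_neg (by norm_num : (0:ℝ) ≤ 2)]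
        field_simp

lemma measurable_cut {p ρ : ℝ} {u : Ed d → ℝ} (hu : Measurable u) :
    Measurable ({y : Ed d | ρ < ‖y‖}.indicator (fun y => Jp p (u y))) :=
  ((Jp_measurable p).comp hu).indicator (measurableSet_lt measurable_const measurable_norm)

lemma G_integrable {s p : ℝ} (hsp : 0 < s * p) (hp : 1 < p) {u : Ed d → ℝ} (hu : memTail d s p u)
    (hvan : ∀ n : ℕ, u =O[nhds (0 : Ed d)] fun x => ‖x‖ ^ n) {ρ : ℝ} (hρ : 0 ≤ ρ) {x : Ed d}
    (hx : 2 * ‖x‖ ≤ ρ) : Integrable (G d (d + s * p) p u ρ x) := by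
  have hq : (0:ℝ) ≤ d + s * p := by positivity
  obtain ⟨C, hC, hb⟩ := weight_bound hq hp hvan (le_refl 0)
  have hm : Measurable (G d (d + s * p) p u ρ x) := by
    unfold G
    refine (measurable_cut hu.1).mul ?_
    unfold Phi
    exact (Measurable.norm (by fun_prop)).pow_const _
  refine ((W_integrable hsp hu).const_mul (2 ^ ((d:ℝ) + s * p) * C)).mono' hm.aestronglyMeasurable
    (Filter.Eventually.of_forall fun y => ?_)
  have hWn := W_nonneg (d + s * p) p u y
  rw [Real.norm_eq_abs]
  by_cases hy : ρ < ‖y‖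
  · rw [G, indicator_of_mem (by exact hy), abs_mul, abs_Jp hp]
    have h1 := Phi_half hq hρ hx hy
    have h2 := hb y
    rw [add_zero] at h2
    calc _ ≤ |u y| ^ (p - 1) * (2 ^ ((d:ℝ) + s * p) * ‖y‖ ^ (-((d:ℝ) + s * p))) := by gcongr
      _ = 2 ^ ((d:ℝ) + s * p) * (|u y| ^ (p - 1) * ‖y‖ ^ (-((d:ℝ) + s * p))) := by ring
      _ ≤ 2 ^ ((d:ℝ) + s * p) * (C * W d (d + s * p) p u y) := by gcongr
      _ = _ := by ring
  · rw [G, indicator_of_notMem (by exact hy), zero_mul, abs_zero]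
    positivity

lemma U_err (hd : 1 ≤ d) {s p : ℝ} (hsp : 0 < s * p) (hp : 1 < p)
    {Ω : Set (Ed d)} (h0Ω : (0 : Ed d) ∈ Ω) {u : Ed d → ℝ} (hu : memTail d s p u)
    {β : ℝ} (hβ : s * p / (p - 1) < β)
    (hreg : ∀ x ∈ Ω, ∃ r > 0, ball x r ⊆ Ω ∧
      ∃ C : ℝ≥0, HolderOnWith C β.toNNReal u (ball x r))
    (hvan : ∀ n : ℕ, u =O[nhds (0 : Ed d)] fun x => ‖x‖ ^ n)
    {U : Ed d → ℝ} (hU : ∀ x ∈ Ω, fracPLapAt d s p u x (U x)) (k : ℕ) :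
    ∃ ε0 > 0, ∃ C ≥ 0, ∀ ε, 0 < ε → ε < ε0 → ∀ x : Ed d, ‖x‖ ≤ ε * k →
      |U x + ∫ y, G d (d + s * p) p u ((2 * k + 1) * ε) x y| ≤ C * ε ^ (k + 1) := by
  obtain ⟨η, hη, ε0, hε0, C, hC, hb⟩ := err_bound hsp hp h0Ω hβ hreg hvan k
  have hWi := W_integrable hsp hu
  have hSi := S_integrable hd hη
  have hI : 0 ≤ (∫ y, W d (d + s * p) p u y) + ∫ y, S d η y :=
    add_nonneg (integral_nonneg (W_nonneg _ _ _)) (integral_nonneg (S_nonneg _))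
  refine ⟨ε0, hε0, C * ((∫ y, W d (d + s * p) p u y) + ∫ y, S d η y), by positivity, ?_⟩
  intro ε hε hεlt x hx
  obtain ⟨hxΩ, hb⟩ := hb ε hε hεlt x hx
  set F : Ed d → ℝ := fun y => Jp p (u x - u y) * Phi d (d + s * p) (x - y) with hF
  have hGi : Integrable (G d (d + s * p) p u ((2 * k + 1) * ε) x) :=
    G_integrable hsp hp hu hvan (by positivity) (by nlinarith)
  have hFm : Measurable F := by
    refine ((Jp_measurable p).comp (measurable_const.sub hu.1)).mul ?_
    unfold Phi
    exact (Measurable.norm (by fun_prop)).pow_const _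
  have hB : Integrable (fun y => C * ε ^ (k + 1) * (W d (d + s * p) p u y + S d η (x - y))) :=
    (hWi.add (hSi.comp_sub_left x)).const_mul _
  have hsum : Integrable (fun y => F y + G d (d + s * p) p u ((2 * k + 1) * ε) x y) :=
    hB.mono' (hFm.aestronglyMeasurable.add hGi.1) (Filter.Eventually.of_forall hb)
  have hFi : Integrable F := by
    have := hsum.sub hGi
    refine this.congr (Filter.Eventually.of_forall fun y => ?_)
    simp
  rw [pv_eq (hU x hxΩ) hFi, ← integral_add hFi hGi]
  calc |∫ y, F y + G d (d + s * p) p u ((2 * k + 1) * ε) x y|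
      ≤ ∫ y, C * ε ^ (k + 1) * (W d (d + s * p) p u y + S d η (x - y)) :=
by
        rw [← Real.norm_eq_abs]
        exact norm_integral_le_of_norm_le hB (Filter.Eventually.of_forall hb)
    _ = _ := by
      rw [integral_const_mul, integral_add hWi (hSi.comp_sub_left x),
        integral_sub_left_eq_self (S d η) volume x]
      ring

lemma Dl_Phi_mvt (q ε : ℝ) (hε : 0 < ε) (l : List (Fin d)) {y : Ed d} (hy : ε * l.length < ‖y‖) :
    ∃ z ∈ closedBall (-y) (ε * l.length), Dl d ε l (Phi d q) (-y) = Pl d l (Phi d q) z := by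
  refine Dl_mvt ε hε l (Phi d q) (-y) ‖y‖ ((Phi_contDiffOn q).mono ?_) hy
  intro z hz h
  rw [mem_singleton_iff.mp h] at hz
  simp at hz

lemma Dl_Phi_tendsto (q : ℝ) (l : List (Fin d)) {y : Ed d} (hy : y ≠ 0) :
    Tendsto (fun ε => Dl d ε l (Phi d q) (-y)) (nhdsWithin 0 (Ioi 0))
      (nhds (Pl d l (Phi d q) (-y))) := by
  have hc : ContinuousAt (Pl d l (Phi d q)) (-y) :=
    (Pl_contDiffOn isOpen_compl_singleton (Phi_contDiffOn q) l).continuousOn.continuousAt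
      (isOpen_compl_singleton.mem_nhds (by simpa using hy))
  rw [Metric.tendsto_nhds]
  intro κ hκ
  obtain ⟨δ, hδ, h⟩ := Metric.continuousAt_iff.mp hc κ hκ
  have hy0 := norm_pos_iff.mpr hy
  have ht : Tendsto (fun ε : ℝ => ε * l.length) (nhdsWithin 0 (Ioi 0)) (nhds 0) := by
    have : Tendsto (fun ε : ℝ => ε * l.length) (nhds 0) (nhds (0 * l.length)) :=
      tendsto_id.mul_const _
    rw [zero_mul] at this
    exact this.mono_left nhdsWithin_le_nhds
  filter_upwards [self_mem_nhdsWithin, ht.eventually (gt_mem_nhds hδ),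
    ht.eventually (gt_mem_nhds hy0)] with ε hε h1 h2
  obtain ⟨z, hz, hz'⟩ := Dl_Phi_mvt q ε hε l h2
  rw [hz']
  exact h (lt_of_le_of_lt (mem_closedBall.mp hz) h1)

lemma Dl_Phi_bound (q : ℝ) (hq : 0 ≤ q) (l : List (Fin d)) :
    ∃ C ≥ 0, ∀ ε, 0 < ε → ∀ y : Ed d, (2 * l.length + 1) * ε < ‖y‖ →
      |Dl d ε l (Phi d q) (-y)| ≤ C * ‖y‖ ^ (-(q + l.length)) := by
  obtain ⟨C, hC, hb⟩ := Pl_bound (d := d) q l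
  refine ⟨C * 2 ^ (q + l.length), by positivity, ?_⟩
  intro ε hε y hy
  have hk : (0:ℝ) ≤ l.length := Nat.cast_nonneg _
  obtain ⟨z, hz, hz'⟩ := Dl_Phi_mvt q ε hε l (y := y) (by nlinarith)
  have hy0 : 0 < ‖y‖ := lt_trans (by positivity) hy
  rw [mem_closedBall, dist_eq_norm, sub_neg_eq_add] at hz
  have hzy : ‖y‖ / 2 ≤ ‖z‖ := by
    have h1 : ‖y‖ ≤ ‖z + y‖ + ‖z‖ := by
      calc ‖y‖ = ‖(z + y) - z‖ := by rw [add_sub_cancel_left]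
        _ ≤ _ := norm_sub_le _ _
    nlinarith
  have hz0 : z ≠ 0 := norm_pos_iff.mp (by linarith)
  rw [hz']
  calc _ ≤ C * ‖z‖ ^ (-(q + l.length)) := hb z hz0
    _ ≤ C * (‖y‖ / 2) ^ (-(q + l.length)) := by
      refine mul_le_mul_of_nonneg_left ?_ hC
      exact Real.rpow_le_rpow_of_nonpos (by positivity) hzy (by linarith)
    _ = _ := by
      rw [Real.div_rpow hy0.le (by norm_num), Real.rpow_neg (by norm_num : (0:ℝ) ≤ 2)]
      field_simp

lemma main_integrable {s p : ℝ} (hsp : 0 < s * p) (hp : 1 < p) {u : Ed d → ℝ} (hu : memTail d s p u)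
    (hvan : ∀ n : ℕ, u =O[nhds (0 : Ed d)] fun x => ‖x‖ ^ n) (l : List (Fin d)) :
    Integrable (fun y => Jp p (u y) * Pl d l (Phi d (d + s * p)) y) := by
  have hq : (0:ℝ) ≤ d + s * p := by positivity
  obtain ⟨C, hC, hb⟩ := weight_bound hq hp hvan (Nat.cast_nonneg l.length)
  obtain ⟨C', hC', hb'⟩ := Pl_bound (d := d) (d + s * p) l
  refine ((W_integrable hsp hu).const_mul (C' * C)).mono'
    (((Jp_measurable p).comp hu.1).mul (Pl_measurable _ l)).aestronglyMeasurable
    (Filter.Eventually.of_forall fun y => ?_)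
  have hWn := W_nonneg (d + s * p) p u y
  rw [Real.norm_eq_abs, abs_mul, abs_Jp hp]
  rcases eq_or_ne y 0 with rfl | hy
  · rw [u_zero hvan, abs_zero, Real.zero_rpow (by linarith), zero_mul]; positivity
  calc _ ≤ |u y| ^ (p - 1) * (C' * ‖y‖ ^ (-((d:ℝ) + s * p + l.length))) := by
        gcongr; exact hb' y hy
    _ = C' * (|u y| ^ (p - 1) * ‖y‖ ^ (-((d:ℝ) + s * p + l.length))) := by ring
    _ ≤ C' * (C * W d (d + s * p) p u y) := mul_le_mul_of_nonneg_left (hb y) hC'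
    _ = _ := by ring

lemma main_tendsto (hd : 1 ≤ d) {s p : ℝ} (hsp : 0 < s * p) (hp : 1 < p)
    {Ω : Set (Ed d)} (h0Ω : (0 : Ed d) ∈ Ω) {u : Ed d → ℝ} (hu : memTail d s p u)
    {β : ℝ} (hβ : s * p / (p - 1) < β)
    (hreg : ∀ x ∈ Ω, ∃ r > 0, ball x r ⊆ Ω ∧
      ∃ C : ℝ≥0, HolderOnWith C β.toNNReal u (ball x r))
    (hvan : ∀ n : ℕ, u =O[nhds (0 : Ed d)] fun x => ‖x‖ ^ n)
    {U : Ed d → ℝ} (hU : ∀ x ∈ Ω, fracPLapAt d s p u x (U x)) (l : List (Fin d)) :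
    Tendsto (fun ε => Dl d ε l U 0) (nhdsWithin 0 (Ioi 0))
      (nhds (-∫ y, Jp p (u y) * Pl d l (Phi d (d + s * p)) (-y))) := by
  set q : ℝ := d + s * p with hqdef
  have hq : (0:ℝ) ≤ q := by positivity
  set k := l.length with hk
  obtain ⟨ε0, hε0, C, hC, herr⟩ := U_err hd hsp hp h0Ω hu hβ hreg hvan hU k
  have hk0 : (0:ℝ) ≤ k := Nat.cast_nonneg _
  -- the cut-off potential
  set g : ℝ → Ed d → ℝ := fun ε z => ∫ y, G d q p u ((2 * k + 1) * ε) z y with hg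
  have hDg : ∀ ε, 0 < ε →
      Integrable (fun y => Dl d ε l (fun z => G d q p u ((2 * k + 1) * ε) z y) 0) ∧
      Dl d ε l (g ε) 0 = ∫ y, Dl d ε l (fun z => G d q p u ((2 * k + 1) * ε) z y) 0 := by
    intro ε hε
    refine Dl_integral ε hε (g ε) (G d q p u ((2 * k + 1) * ε)) l 0 (fun z hz => ⟨?_, rfl⟩)
    rw [mem_closedBall, dist_zero_right] at hz
    exact G_integrable hsp hp hu hvan (by positivity) (by nlinarith)
  have hDG : ∀ ε y, Dl d ε l (fun z => G d q p u ((2 * k + 1) * ε) z y) 0 =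
      ({y : Ed d | (2 * k + 1) * ε < ‖y‖}.indicator (fun y => Jp p (u y)) y) *
        Dl d ε l (Phi d q) (-y) := by
    intro ε y
    simp only [G]
    rw [Dl_const_mul, Dl_translate, zero_sub]
  have hg_lim : Tendsto (fun ε => Dl d ε l (g ε) 0) (nhdsWithin 0 (Ioi 0))
      (nhds (∫ y, Jp p (u y) * Pl d l (Phi d q) (-y))) := by
    obtain ⟨C1, hC1, hb1⟩ := weight_bound hq hp hvan (Nat.cast_nonneg k)
    obtain ⟨C2, hC2, hb2⟩ := Dl_Phi_bound (d := d) q hq l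
    have hlim : Tendsto (fun ε => ∫ y, Dl d ε l (fun z => G d q p u ((2 * k + 1) * ε) z y) 0)
        (nhdsWithin 0 (Ioi 0)) (nhds (∫ y, Jp p (u y) * Pl d l (Phi d q) (-y))) := by
      refine tendsto_integral_filter_of_dominated_convergence
        (fun y => C2 * C1 * W d q p u y) ?_ ?_ ((W_integrable hsp hu).const_mul _) ?_
      · filter_upwards [self_mem_nhdsWithin] with ε hε using (hDg ε hε).1.1
      · filter_upwards [self_mem_nhdsWithin] with ε hε
        refine Filter.Eventually.of_forall fun y => ?_
        have hWn := W_nonneg q p u y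
        rw [hDG, Real.norm_eq_abs]
        by_cases hy : (2 * k + 1) * ε < ‖y‖
        · rw [indicator_of_mem (by exact hy), abs_mul, abs_Jp hp]
          calc _ ≤ |u y| ^ (p - 1) * (C2 * ‖y‖ ^ (-(q + k))) := by
                gcongr; exact hb2 ε hε y hy
            _ = C2 * (|u y| ^ (p - 1) * ‖y‖ ^ (-(q + k))) := by ring
            _ ≤ C2 * (C1 * W d q p u y) := mul_le_mul_of_nonneg_left (hb1 y) hC2
            _ = _ := by ring
        · rw [indicator_of_notMem (by exact hy), zero_mul, abs_zero]
          positivity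
      · refine Filter.Eventually.of_forall fun y => ?_
        simp only [hDG]
        rcases eq_or_ne y 0 with rfl | hy
        · have h0 : Jp p (u 0) = 0 := by rw [u_zero hvan]; simp [Jp]
          have : ∀ ε : ℝ, {y : Ed d | (2 * k + 1) * ε < ‖y‖}.indicator (fun y => Jp p (u y)) 0 = 0 :=
            fun ε => indicator_apply_eq_zero.mpr (fun _ => h0)
          simp only [this, h0, zero_mul]
          exact tendsto_const_nhds
        · have hy0 := norm_pos_iff.mpr hy
          refine ((Dl_Phi_tendsto q l hy).const_mul (Jp p (u y))).congr' ?_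
          have ht : Tendsto (fun ε : ℝ => (2 * k + 1) * ε) (nhdsWithin 0 (Ioi 0)) (nhds 0) := by
            have : Tendsto (fun ε : ℝ => (2 * k + 1) * ε) (nhds 0) (nhds ((2 * k + 1) * 0)) :=
              tendsto_id.const_mul _
            rw [mul_zero] at this
            exact this.mono_left nhdsWithin_le_nhds
          filter_upwards [ht.eventually (gt_mem_nhds hy0)] with ε hε
          rw [indicator_of_mem (by exact hε)]
    refine hlim.congr' ?_
    filter_upwards [self_mem_nhdsWithin] with ε hε using (hDg ε hε).2.symm
  have herr_lim : Tendsto (fun ε => Dl d ε l (fun z => U z + g ε z) 0) (nhdsWithin 0 (Ioi 0))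
      (nhds 0) := by
    have hz : Tendsto (fun ε : ℝ => 2 ^ k * C * ε) (nhdsWithin 0 (Ioi 0)) (nhds 0) := by
      have : Tendsto (fun ε : ℝ => 2 ^ k * C * ε) (nhds 0) (nhds (2 ^ k * C * 0)) :=
        tendsto_id.const_mul _
      rw [mul_zero] at this
      exact this.mono_left nhdsWithin_le_nhds
    refine squeeze_zero_norm' ?_ hz
    filter_upwards [self_mem_nhdsWithin, mem_nhdsWithin_of_mem_nhds (Iio_mem_nhds hε0)]
      with ε hε hε'
    have hε : 0 < ε := hε
    have := Dl_bound ε hε (fun z => U z + g ε z) (C * ε ^ (k + 1)) l 0 (fun z hz => by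
      rw [mem_closedBall, dist_zero_right] at hz
      exact herr ε hε hε' z hz)
    refine this.trans (le_of_eq ?_)
    rw [← hk, div_pow, pow_succ]
    field_simp
  have := herr_lim.sub hg_lim
  rw [zero_sub] at this
  refine this.congr fun ε => ?_
  rw [Dl_add]; ring

end FDQ

/-- Step 1: convergence of the finite difference quotients of
`U = (-Δ_p)^s u` at the origin. If `u ∈ L^{p-1}_{sp}(ℝ^d)` is locally `β`-Hölder in `Ω`
with `sp/(p-1) < β ≤ 1`, vanishes to infinite order at `0`, and the principal value
`U(x) = (-Δ_p)^s u(x)` exists for every `x ∈ Ω`, then for every multiindex `α`, the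
function `y ↦ J_p(u(y)) ∂^α_y |y|^{-d-sp}` is integrable and
`D_ε^α U(0) → -∫ J_p(u(y)) (-1)^{|α|} ∂^α_y |y|^{-d-sp} dy` as `ε → 0⁺`. -/
theorem finite_difference_quotients_converge
    (d : ℕ) (hd : 1 ≤ d) (s p : ℝ) (hs : s ∈ Ioo (0 : ℝ) 1) (hp : 1 < p)
    (Ω : Set (Ed d)) (hΩ : IsOpen Ω) (h0Ω : (0 : Ed d) ∈ Ω)
    (u : Ed d → ℝ) (hu : memTail d s p u)
    (β : ℝ) (hβ : s * p / (p - 1) < β) (hβ_le : β ≤ 1)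
    (hreg : ∀ x ∈ Ω, ∃ r > 0, ball x r ⊆ Ω ∧
      ∃ C : ℝ≥0, HolderOnWith C β.toNNReal u (ball x r))
    (hvan : ∀ n : ℕ, u =O[nhds (0 : Ed d)] fun x => ‖x‖ ^ n)
    (U : Ed d → ℝ) (hU : ∀ x ∈ Ω, fracPLapAt d s p u x (U x)) :
    ∀ α : Fin d → ℕ,
      Integrable (fun y : Ed d =>
        Jp p (u y) * pderivMulti d α (fun z : Ed d => ‖z‖ ^ (-((d : ℝ) + s * p))) y) ∧
      Tendsto (fun ε : ℝ => fdiffMulti d ε α U 0) (nhdsWithin 0 (Ioi 0))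
        (nhds (-∫ y : Ed d, Jp p (u y) * (-1 : ℝ) ^ (∑ i, α i) *
          pderivMulti d α (fun z : Ed d => ‖z‖ ^ (-((d : ℝ) + s * p))) y)) := by
  have hsp : 0 < s * p := mul_pos hs.1 (by linarith)
  intro α
  have hPhi : (fun z : Ed d => ‖z‖ ^ (-((d : ℝ) + s * p))) = FDQ.Phi d (d + s * p) := rfl
  simp only [hPhi, FDQ.pderivMulti_eq, FDQ.fdiffMulti_eq]
  refine ⟨FDQ.main_integrable hsp hp hu hvan _, ?_⟩
  have h := FDQ.main_tendsto hd hsp hp h0Ω hu hβ hreg hvan hU (FDQ.lst d α)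
  simpa only [FDQ.Pl_neg, FDQ.length_lst, ← mul_assoc] using h
end
end
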